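/- Let (W, S) be a finite Coxeter system over a finite index set B with |B| ≥ 3 whose Coxeter matrix is crystallographic, i.e. M i j ∈ {2, 3, 4, 6} for all i ≠ j. Let i₁, i₂, i₃ ∈ B be pairwise distinct with M i₁ i₂ ≥ 3, M i₂ i₃ ≥ 3 and M i₁ i₃ = 2. Then there exists a Hamiltonian circuit map θ : ℤ/kℤ → W (k = |W|) such that for every t ∈ ℤ the edge label at every second step avoids s_{i₁} and s_{i₃}: θ(2t+1)·θ(2t)⁻¹ ∉ {s_{i₁}, s_{i₃}}. In particular, if |B| = 3, then θ is i₂-convenient, i.e. θ(2t+1) = s_{i₂} · θ(2t) for all t. -/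

import Mathlib

/-!
A Hamilton cycle whose edges are coloured alternately is a pair of disjoint perfect matchings with
connected union. Start with the dihedral cycle on `⟨s i₁, s i₂⟩`, whose `true` edges are labelled
`s i₂`, and add the other generators one at a time. If the new generator `t` commutes with all old
ones but one, say `a₀`, then the cycle on each coset of the old subgroup has edges with a label
`a ≠ a₀`, since its two colours have different labels at each vertex. Such an edge is parallel to
an edge of the `t`-translate of the coset, and trading both for the two edges labelled `t` that
join their ends merges the two cycles. Adding `s i₃` (with `a₀ = s i₂`) only affects the `false`
edges.

For each later generator there must be at most one old neighbour in the Coxeter graph. Averaging an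
inner product over the finite group `W` makes the geometric representation orthogonal, so the Gram
matrix `-cos (π / M i j)` is positive definite. Evaluated at indicator vectors this bounds the
number of edges, making the Coxeter graph a forest, from which leaves outside the path
`i₁ - i₂ - i₃` can be removed until only this path is left.
-/

section AlternatingCycle

open Set

variable {X Y : Type*} {U C : Set X} {N : Bool → X → X} {b : Bool} {x : X}

theorem even_ncard_of_involution {S : Set X} {f : X → X} (hS : S.Finite) (hmaps : MapsTo f S S)
    (hinv : LeftInvOn f f S) (hne : ∀ z ∈ S, f z ≠ z) : Even S.ncard := by
  have hsum : ∑ _z ∈ hS.toFinset, (1 : ZMod 2) = 0 := by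
    refine Finset.sum_involution (fun z _ ↦ f z) (fun _ _ ↦ by decide) ?_ ?_ ?_ <;>
      simp only [Finite.mem_toFinset]
    exacts [fun z hz _ ↦ hne z hz, fun z hz ↦ hmaps hz, fun z hz ↦ hinv hz]
  rw [ncard_eq_toFinset_card S hS, ← ZMod.natCast_eq_zero_iff_even]
  simpa using hsum

/-- `N false` and `N true` are disjoint perfect matchings of the set `U`, each encoded as a
fixed-point-free involution: the edges of colour `b` are the pairs `{x, N b x}`. -/
structure IsMatchingPair (U : Set X) (N : Bool → X → X) : Prop where
  mapsTo (b : Bool) : MapsTo (N b) U U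
  leftInvOn (b : Bool) : LeftInvOn (N b) (N b) U
  apply_ne (b : Bool) : ∀ x ∈ U, N b x ≠ x
  true_ne_false : ∀ x ∈ U, N true x ≠ N false x

/-- `N` is an alternating Hamilton cycle on the vertex set `U`, encoded as a pair of disjoint
perfect matchings whose union is connected. -/
structure IsAlternatingCycle (U : Set X) (N : Bool → X → X) : Prop extends
    IsMatchingPair U N where
  subset_of_mapsTo : ∀ A ⊆ U, A.Nonempty → (∀ b, MapsTo (N b) A A) → U ⊆ A

namespace IsAlternatingCycle

theorem congr {N' : Bool → X → X} (h : IsAlternatingCycle U N) (hN : ∀ b, EqOn (N b) (N' b) U) :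
    IsAlternatingCycle U N' where
  mapsTo b := (h.mapsTo b).congr (hN b)
  leftInvOn b z hz := by rw [← hN b hz, ← hN b (h.mapsTo b hz), h.leftInvOn b hz]
  apply_ne b z hz := hN b hz ▸ h.apply_ne b z hz
  true_ne_false z hz := hN true hz ▸ hN false hz ▸ h.true_ne_false z hz
  subset_of_mapsTo A hAU hA hmaps :=
    h.subset_of_mapsTo A hAU hA fun b ↦ (hmaps b).congr fun _ hz ↦ (hN b (hAU hz)).symm

theorem conj (h : IsAlternatingCycle U N) (e : X ≃ Y) :
    IsAlternatingCycle (e.symm ⁻¹' U) fun b y ↦ e (N b (e.symm y)) where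
  mapsTo b y hy := by simpa using h.mapsTo b hy
  leftInvOn b y hy := by simp [h.leftInvOn b hy]
  apply_ne b y hy := by simpa [← e.eq_symm_apply] using h.apply_ne b _ hy
  true_ne_false y hy := by simpa using h.true_ne_false _ hy
  subset_of_mapsTo A hAU hA hmaps := by
    have hU : U ⊆ e ⁻¹' A := by
      refine h.subset_of_mapsTo _ (fun z hz ↦ by simpa using hAU hz)
        (hA.preimage e.surjective) fun b z hz ↦ ?_
      simpa using hmaps b hz
    exact fun y hy ↦ by simpa using hU hy

/-- Deleting one edge leaves a cycle connected: a proper part closed under the remaining edges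
would contain exactly one end of the deleted edge, and so have both even and odd size. -/
theorem subset_of_mapsTo_off_edge (h : IsAlternatingCycle U N) (hU : U.Finite) {A : Set X}
    (hAU : A ⊆ U) (hA : A.Nonempty) (hx : x ∈ U)
    (hmaps : ∀ c, ∀ z ∈ A, (c = b → z ≠ x ∧ z ≠ N b x) → N c z ∈ A) : U ⊆ A := by
  have hxx := h.leftInvOn b hx
  have hend : ∀ z ∈ A, z = x ∨ z = N b x → N b z ∈ A := by
    intro z hz hzx
    by_contra hNz
    have heven : Even A.ncard :=
      even_ncard_of_involution (hU.subset hAU) (f := N !b) (fun w hw ↦ hmaps _ w hw (by simp))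
        (fun w hw ↦ h.leftInvOn _ (hAU hw)) fun w hw ↦ h.apply_ne _ w (hAU hw)
    have heven' : Even (A \ {z}).ncard := by
      refine even_ncard_of_involution ((hU.subset hAU).sdiff) (f := N b) ?_
        (fun w hw ↦ h.leftInvOn b (hAU hw.1)) fun w hw ↦ h.apply_ne b w (hAU hw.1)
      rintro w ⟨hw, hwz : w ≠ z⟩
      have hwNz : w ≠ N b z := fun hwz ↦ hNz (hwz ▸ hw)
      refine ⟨hmaps b w hw fun _ ↦ ?_, fun hNw : N b w = z ↦ hwNz ?_⟩
      · rcases hzx with rfl | rfl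
        · exact ⟨hwz, hwNz⟩
        · exact ⟨hxx ▸ hwNz, hwz⟩
      · rw [← hNw, h.leftInvOn b (hAU hw)]
    rw [← ncard_sdiff_singleton_add_one hz (hU.subset hAU), Nat.even_add_one] at heven
    exact heven heven'
  refine h.subset_of_mapsTo A hAU hA fun c z hz ↦ ?_
  by_cases hc : c = b ∧ (z = x ∨ z = N b x)
  · exact hc.1 ▸ hend z hz hc.2
  · exact hmaps c z hz fun hcb ↦ by tauto

end IsAlternatingCycle

open Classical in
/-- The matchings obtained from `N` by letting `τ` replace the matching of colour `b` on `Q`. -/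
noncomputable def rematch (N : Bool → X → X) (b : Bool) (Q : Set X) (τ : X → X) : Bool → X → X :=
  Function.update N b (Q.piecewise τ (N b))

section Rematch

variable {Q : Set X} {τ : X → X}

theorem rematch_of_mem (hx : x ∈ Q) : rematch N b Q τ b x = τ x := by
  simp [rematch, hx]

theorem rematch_of_notMem {c : Bool} (hx : c = b → x ∉ Q) : rematch N b Q τ c x = N c x := by
  by_cases hc : c = b
  · subst hc
    simp [rematch, hx rfl]
  · simp [rematch, hc]

theorem IsMatchingPair.union (hU : IsMatchingPair U N) (hC : IsMatchingPair C N) :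
    IsMatchingPair (U ∪ C) N where
  mapsTo b := (hU.mapsTo b).union_union (hC.mapsTo b)
  leftInvOn b _ hz := hz.elim (hU.leftInvOn b ·) (hC.leftInvOn b ·)
  apply_ne b z hz := hz.elim (hU.apply_ne b z) (hC.apply_ne b z)
  true_ne_false z hz := hz.elim (hU.true_ne_false z) (hC.true_ne_false z)

theorem isMatchingPair_rematch (h : IsMatchingPair U N) (hQU : Q ⊆ U) (hNQ : MapsTo (N b) Q Q)
    (hτQ : MapsTo τ Q Q) (hτ : LeftInvOn τ τ Q) (hτz : ∀ z ∈ Q, τ z ≠ z)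
    (hτN : ∀ z ∈ Q, τ z ≠ N (!b) z) : IsMatchingPair U (rematch N b Q τ) where
  mapsTo c z hz := by
    by_cases hc : c = b ∧ z ∈ Q
    · rw [hc.1, rematch_of_mem hc.2]
      exact hQU (hτQ hc.2)
    · rw [rematch_of_notMem (by tauto)]
      exact h.mapsTo c hz
  leftInvOn c z hz := by
    by_cases hc : c = b ∧ z ∈ Q
    · rw [hc.1, rematch_of_mem hc.2, rematch_of_mem (hτQ hc.2), hτ hc.2]
    · have hN : c = b → N c z ∉ Q := by
        rintro rfl hNz
        exact hc ⟨rfl, h.leftInvOn c hz ▸ hNQ hNz⟩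
      rw [rematch_of_notMem (x := z) (by tauto), rematch_of_notMem hN, h.leftInvOn c hz]
  apply_ne c z hz := by
    by_cases hc : c = b ∧ z ∈ Q
    · rw [hc.1, rematch_of_mem hc.2]
      exact hτz z hc.2
    · rw [rematch_of_notMem (by tauto)]
      exact h.apply_ne c z hz
  true_ne_false z hz := by
    by_cases hzQ : z ∈ Q
    · have hne : rematch N b Q τ b z ≠ rematch N b Q τ (!b) z := by
        rw [rematch_of_mem hzQ, rematch_of_notMem (by simp)]
        exact hτN z hzQ
      cases b
      exacts [hne.symm, hne]
    · simpa only [rematch_of_notMem fun _ ↦ hzQ] using h.true_ne_false z hz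

theorem IsAlternatingCycle.subset_of_mapsTo_rematch (h : IsAlternatingCycle U N) (hU : U.Finite)
    (hx : x ∈ U) (hQ : Q ∩ U ⊆ {x, N b x}) {A : Set X} (hA : (A ∩ U).Nonempty)
    (hmaps : ∀ c, MapsTo (rematch N b Q τ c) A A) : U ⊆ A := by
  refine (h.subset_of_mapsTo_off_edge hU (b := b) inter_subset_right hA hx ?_).trans
    inter_subset_left
  rintro c z ⟨hzA, hzU⟩ hz
  refine ⟨rematch_of_notMem (N := N) (τ := τ) (fun hc hzQ ↦ ?_) ▸ hmaps c hzA, h.mapsTo c hzU⟩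
  exact (hQ ⟨hzQ, hzU⟩).elim (hz hc).1 (hz hc).2

theorem union_subset_of_mapsTo_rematch (hU : IsAlternatingCycle U N) (hC : IsAlternatingCycle C N)
    (hUfin : U.Finite) (hCfin : C.Finite) (hτ : Function.Involutive τ)
    (hx : x ∈ U) (hτx : τ x ∈ C) (hxQ : x ∈ Q) (hτxQ : τ x ∈ Q)
    (hQU : Q ∩ U ⊆ {x, N b x}) (hQC : Q ∩ C ⊆ {τ x, N b (τ x)}) {A : Set X} (hAUC : A ⊆ U ∪ C)
    (hA : A.Nonempty) (hmaps : ∀ c, MapsTo (rematch N b Q τ c) A A) : U ∪ C ⊆ A := by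
  have hτA : ∀ z ∈ A, z ∈ Q → τ z ∈ A := fun z hzA hzQ ↦ by
    simpa only [rematch_of_mem hzQ] using hmaps b hzA
  obtain ⟨z, hz⟩ := hA
  rcases hAUC hz with hzU | hzC
  · have hUA := hU.subset_of_mapsTo_rematch hUfin hx hQU ⟨z, hz, hzU⟩ hmaps
    exact union_subset hUA
      (hC.subset_of_mapsTo_rematch hCfin hτx hQC ⟨τ x, hτA x (hUA hx) hxQ, hτx⟩ hmaps)
  · have hCA := hC.subset_of_mapsTo_rematch hCfin hτx hQC ⟨z, hz, hzC⟩ hmaps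
    exact union_subset
      (hU.subset_of_mapsTo_rematch hUfin hx hQU ⟨x, hτ x ▸ hτA _ (hCA hτx) hτxQ, hx⟩ hmaps) hCA

/-- Two disjoint cycles with parallel edges `{x, N b x}` and `{τ x, τ (N b x)}` are merged into one
by trading these edges for the rungs `{x, τ x}` and `{N b x, τ (N b x)}`. -/
theorem IsAlternatingCycle.union (hU : IsAlternatingCycle U N) (hC : IsAlternatingCycle C N)
    (hUfin : U.Finite) (hCfin : C.Finite) (hUC : Disjoint U C) (hτ : Function.Involutive τ)
    (hx : x ∈ U) (hτx : τ x ∈ C) (hcomm : N b (τ x) = τ (N b x)) :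
    IsAlternatingCycle (U ∪ C) (rematch N b {x, N b x, τ x, τ (N b x)} τ) := by
  set Q : Set X := {x, N b x, τ x, τ (N b x)} with hQ
  have hNx : N b x ∈ U := hU.mapsTo b hx
  have hτNx : τ (N b x) ∈ C := hcomm ▸ hC.mapsTo b hτx
  have hNNx : N b (N b x) = x := hU.leftInvOn b hx
  have hNτNx : N b (τ (N b x)) = τ x := hcomm ▸ hC.leftInvOn b hτx
  have hside : ∀ z ∈ Q, z ∈ U ∧ τ z ∈ C ∨ z ∈ C ∧ τ z ∈ U := by
    rintro z (rfl | rfl | rfl | rfl) <;> simp [*, hτ _]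
  have hτN : ∀ z ∈ Q, ∀ y, (z ∈ U → y ∈ U) → (z ∈ C → y ∈ C) → τ z ≠ y := by
    rintro z hz y hyU hyC rfl
    rcases hside z hz with ⟨hzU, hτz⟩ | ⟨hzC, hτz⟩
    exacts [hUC.ne_of_mem (hyU hzU) hτz rfl, hUC.ne_of_mem hτz (hyC hzC) rfl]
  refine ⟨isMatchingPair_rematch (hU.toIsMatchingPair.union hC.toIsMatchingPair)
    (fun z hz ↦ (hside z hz).imp And.left And.left) ?_ ?_ (fun z _ ↦ hτ z)
    (fun z hz ↦ hτN z hz z id id)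
    (fun z hz ↦ hτN z hz _ (fun h ↦ hU.mapsTo _ h) fun h ↦ hC.mapsTo _ h), ?_⟩
  · rintro z (rfl | rfl | rfl | rfl) <;> simp [hQ, hNNx, hNτNx, hcomm]
  · rintro z (rfl | rfl | rfl | rfl) <;> simp [hQ, hτ _]
  refine fun A ↦ union_subset_of_mapsTo_rematch hU hC hUfin hCfin hτ hx hτx (by simp [hQ])
    (by simp [hQ]) ?_ ?_
  · rintro z ⟨rfl | rfl | rfl | rfl, hz⟩
    exacts [.inl rfl, .inr rfl, (hUC.ne_of_mem hz hτx rfl).elim, (hUC.ne_of_mem hz hτNx rfl).elim]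
  · rintro z ⟨rfl | rfl | rfl | rfl, hz⟩
    exacts [(hUC.ne_of_mem hx hz rfl).elim, (hUC.ne_of_mem hNx hz rfl).elim, .inl rfl,
      .inr hcomm.symm]

end Rematch

end AlternatingCycle

section Parametrization

open Set

variable {X : Type*}

theorem apply_zpow_of_apply_eq {β : Type*} {G : Equiv.Perm X} {p : X → β}
    (hp : ∀ x, p (G x) = p x) (n : ℤ) (x : X) : p ((G ^ n) x) = p x := by
  induction n with
  | zero => rfl
  | succ n ih => rw [add_comm, zpow_one_add, Equiv.Perm.mul_apply, hp, ih]
  | pred n ih =>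
    rw [← ih, sub_eq_neg_add, zpow_add, zpow_neg_one, Equiv.Perm.mul_apply, ← hp]
    simp

variable [Finite X]

theorem exists_zmod_bijective_zpow {F : Equiv.Perm X} {x₀ : X} (hF : ∀ x, ∃ n : ℤ, (F ^ n) x₀ = x) :
    ∃ θ : ZMod (Nat.card X) → X, Function.Bijective θ ∧ ∀ n : ℤ, θ n = (F ^ n) x₀ := by
  have := Fintype.ofFinite X
  have hcycle : F.IsCycleOn (Finset.univ : Finset X) := by
    refine ⟨by simp, fun x _ y _ ↦ ?_⟩
    obtain ⟨m, rfl⟩ := hF x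
    obtain ⟨n, rfl⟩ := hF y
    exact ⟨n - m, by rw [← Equiv.Perm.mul_apply, ← zpow_add, sub_add_cancel]⟩
  have hiff (m n : ℤ) : (F ^ m) x₀ = (F ^ n) x₀ ↔ (m : ZMod (Nat.card X)) = n := by
    rw [hcycle.zpow_apply_eq_zpow_apply (Finset.mem_univ x₀), ZMod.intCast_eq_intCast_iff,
      Finset.card_univ, Nat.card_eq_fintype_card]
  have hθ (n : ℤ) : (F ^ ((n : ZMod (Nat.card X)).cast : ℤ)) x₀ = (F ^ n) x₀ :=
    (hiff _ _).2 (ZMod.intCast_zmod_cast _)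
  refine ⟨fun t ↦ (F ^ (t.cast : ℤ)) x₀, ⟨fun s t hst ↦ ?_, fun x ↦ ?_⟩, hθ⟩
  · simpa using (hiff _ _).1 hst
  · exact (hF x).imp' _ fun n hn ↦ (hθ n).trans hn

theorem IsAlternatingCycle.exists_zmod_bijective [Nonempty X] {N : Bool → X → X}
    (h : IsAlternatingCycle univ N) {p : X → Bool} (hp : ∀ b x, p (N b x) = !p x) :
    ∃ θ : ZMod (Nat.card X) → X, Function.Bijective θ ∧
      (∀ t, ∃ b, θ (t + 1) = N b (θ t)) ∧ ∀ t, θ (2 * t + 1) = N true (θ (2 * t)) := by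
  have hNN (b x) : N b (N b x) = x := h.leftInvOn b (mem_univ x)
  let F : Equiv.Perm X :=
    { toFun := fun x ↦ N (p x) x
      invFun := fun x ↦ N (!p x) x
      left_inv := fun x ↦ by simp [hp, hNN]
      right_inv := fun x ↦ by simp [hp, hNN] }
  have hpF (x) : p (F x) = !p x := hp _ x
  obtain ⟨x₀, hx₀⟩ : ∃ x₀, p x₀ = true := by
    obtain ⟨x⟩ := ‹Nonempty X›
    cases hx : p x
    exacts [⟨N true x, by simp [hp, hx]⟩, ⟨x, hx⟩]
  have hreach (x) : ∃ n : ℤ, (F ^ n) x₀ = x := by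
    refine h.subset_of_mapsTo (range fun n : ℤ ↦ (F ^ n) x₀) (subset_univ _) ⟨_, 0, rfl⟩ ?_
      (mem_univ x)
    rintro b _ ⟨n, rfl⟩
    dsimp only
    rcases Bool.eq_or_eq_not b (p ((F ^ n) x₀)) with hb | hb
    · exact ⟨1 + n, by simp [zpow_add, hb, F]⟩
    · exact ⟨-1 + n, by simp [zpow_add, hb, F, Equiv.Perm.inv_def]⟩
  obtain ⟨θ, hθ, hθF⟩ := exists_zmod_bijective_zpow hreach
  have hsucc (t) : θ (t + 1) = N (p (θ t)) (θ t) := by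
    obtain ⟨n, rfl⟩ := ZMod.intCast_surjective t
    rw [← Int.cast_one, ← Int.cast_add, hθF, hθF, add_comm, zpow_one_add]
    rfl
  refine ⟨θ, hθ, fun t ↦ ⟨_, hsucc t⟩, fun t ↦ ?_⟩
  obtain ⟨n, rfl⟩ := ZMod.intCast_surjective t
  have hpF2 (x) : p ((F ^ (2 : ℤ)) x) = p x := by simp [zpow_ofNat, pow_two, hpF]
  have hpθ : p (θ (2 * n)) = true := by
    rw [← Int.cast_ofNat, ← Int.cast_mul, hθF, zpow_mul, apply_zpow_of_apply_eq hpF2, hx₀]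
  rw [hsucc, hpθ]

end Parametrization

section CayleyCycle

open Set

variable {W : Type*} [Group W] {U C : Set W} {L L₀ : Bool → Set W} {N N₀ : Bool → W → W}

/-- An alternating Hamilton cycle on the set `U` of vertices of a Cayley graph of `W`, whose edges
join `x` to `a * x`: the edges of colour `b` have their labels `a` in `L b`. -/
structure IsAlternatingCayleyCycle (U : Set W) (L : Bool → Set W) (N : Bool → W → W) : Prop extends
    IsAlternatingCycle U N where
  apply_mul_inv_mem (b : Bool) : ∀ x ∈ U, N b x * x⁻¹ ∈ L b

theorem IsAlternatingCayleyCycle.mono (h : IsAlternatingCayleyCycle U L₀ N) (hL : L₀ ≤ L) :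
    IsAlternatingCayleyCycle U L N where
  toIsAlternatingCycle := h.toIsAlternatingCycle
  apply_mul_inv_mem b x hx := hL b (h.apply_mul_inv_mem b x hx)

theorem IsAlternatingCayleyCycle.mul_right (h : IsAlternatingCayleyCycle U L N) (g : W) :
    IsAlternatingCayleyCycle {z | z * g⁻¹ ∈ U} L fun b z ↦ N b (z * g⁻¹) * g where
  toIsAlternatingCycle := h.conj (Equiv.mulRight g)
  apply_mul_inv_mem b z hz := by simpa [mul_assoc] using h.apply_mul_inv_mem b _ hz

theorem mul_mem_of_mem_closure {T A : Set W} (hT : ∀ a ∈ T, a * a = 1)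
    (hA : ∀ a ∈ T, ∀ x ∈ A, a * x ∈ A) {g x : W} (hg : g ∈ Subgroup.closure T) (hx : x ∈ A) :
    g * x ∈ A := by
  induction hg using Subgroup.closure_induction_left with
  | one => rwa [one_mul]
  | mul_left a ha g _ ih => rw [mul_assoc]; exact hA a ha _ ih
  | inv_mul_cancel a ha g _ ih =>
    rw [inv_eq_of_mul_eq_one_left (hT a ha), mul_assoc]
    exact hA a ha _ ih

theorem isAlternatingCayleyCycle_closure_range {s : Bool → W} (hs : ∀ b, s b * s b = 1)
    (hs_one : ∀ b, s b ≠ 1) (hs_ne : s true ≠ s false) :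
    IsAlternatingCayleyCycle (Subgroup.closure (range s)) (fun b ↦ {s b}) fun b x ↦ s b * x where
  mapsTo b x hx := mul_mem (Subgroup.subset_closure (mem_range_self b)) hx
  leftInvOn b x _ := by simp [← mul_assoc, hs]
  apply_ne b x _ := by simpa using hs_one b
  true_ne_false x _ := by simpa using hs_ne
  subset_of_mapsTo A hA := by
    rintro ⟨x, hx⟩ hmaps y hy
    rw [← inv_mul_cancel_right y x]
    refine mul_mem_of_mem_closure (forall_mem_range.2 hs)
      (forall_mem_range.2 fun b z hz ↦ hmaps b hz) (mul_mem hy (inv_mem (hA hx))) hx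
  apply_mul_inv_mem b x _ := by simp

/-- An alternating Cayley cycle on a union `U` of right cosets of the subgroup generated by `T`,
built from translates of a cycle `N₀` on that subgroup. A vertex `x` whose neighbour `t * x` is not
reached yet has kept the two edge labels it has in a translate of `N₀`. -/
structure IsCosetExtension (T : Set W) (t : W) (L : Bool → Set W) (N₀ : Bool → W → W) (U : Set W)
    (N : Bool → W → W) : Prop extends IsAlternatingCayleyCycle U L N where
  one_mem : 1 ∈ U
  subset_closure : U ⊆ Subgroup.closure (insert t T)
  closure_mul_mem : ∀ g ∈ Subgroup.closure T, ∀ x ∈ U, g * x ∈ U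
  exists_label_eq : ∀ x ∈ U, t * x ∉ U →
    ∃ g ∈ Subgroup.closure T, ∀ b, N b x * x⁻¹ = N₀ b g * g⁻¹

theorem IsAlternatingCayleyCycle.isCosetExtension {T : Set W}
    (h₀ : IsAlternatingCayleyCycle (Subgroup.closure T) L N₀) (t : W) :
    IsCosetExtension T t L N₀ (Subgroup.closure T) N₀ where
  toIsAlternatingCayleyCycle := h₀
  one_mem := one_mem _
  subset_closure := Subgroup.closure_mono (subset_insert t T)
  closure_mul_mem _ hg _ hx := mul_mem hg hx
  exists_label_eq x hx _ := ⟨x, hx, fun _ ↦ rfl⟩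

variable [Finite W]

theorem IsAlternatingCayleyCycle.exists_union {N' : Bool → W → W} {x t a : W} {b : Bool}
    (hU : IsAlternatingCayleyCycle U L N) (hC : IsAlternatingCayleyCycle C L N')
    (hUC : Disjoint U C) (ht : t * t = 1) (htL : t ∈ L b) (hat : Commute a t) (hx : x ∈ U)
    (htx : t * x ∈ C) (hNx : N b x = a * x) (hNtx : N' b (t * x) = a * (t * x)) :
    ∃ N'', IsAlternatingCayleyCycle (U ∪ C) L N'' ∧
      (∀ c, ∀ z ∈ U, t * z ∉ C → N'' c z = N c z) ∧
      ∀ c, ∀ z ∈ C, t * z ∉ U → N'' c z = N' c z := by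
  classical
  have htt (z : W) : t * (t * z) = z := by rw [← mul_assoc, ht, one_mul]
  let P : Bool → W → W := fun c ↦ U.piecewise (N c) (N' c)
  have hPU (c) : EqOn (P c) (N c) U := piecewise_eqOn U _ _
  have hPC (c) : EqOn (P c) (N' c) C := fun z hz ↦
    piecewise_eq_of_notMem U _ _ (hUC.notMem_of_mem_right hz)
  have hPx : P b x = a * x := (hPU b hx).trans hNx
  have htax : t * (a * x) = a * (t * x) := by rw [← mul_assoc, ← hat.eq, mul_assoc]
  have hax : a * x ∈ U := hNx ▸ hU.mapsTo b hx
  have hatx : a * (t * x) ∈ C := hNtx ▸ hC.mapsTo b htx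
  set Q : Set W := {x, a * x, t * x, t * (a * x)} with hQ
  have hQUC : ∀ z ∈ Q, z ∈ U ∧ t * z ∈ C ∨ z ∈ C ∧ t * z ∈ U := by
    rintro z (rfl | rfl | rfl | rfl)
    exacts [.inl ⟨hx, htx⟩, .inl ⟨hax, htax ▸ hatx⟩, .inr ⟨htx, (htt x).symm ▸ hx⟩,
      .inr ⟨htax ▸ hatx, (htt (a * x)).symm ▸ hax⟩]
  have hcycle : IsAlternatingCycle (U ∪ C) (rematch P b Q (t * ·)) := by
    have := (hU.congr fun c ↦ (hPU c).symm).union (hC.congr fun c ↦ (hPC c).symm) (toFinite U)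
      (toFinite C) hUC htt hx htx (b := b) (by rw [hPC b htx, hPx, hNtx, htax])
    rwa [hPx] at this
  refine ⟨rematch P b Q (t * ·), ⟨hcycle, fun c z hz ↦ ?_⟩, fun c z hz htz ↦ ?_,
    fun c z hz htz ↦ ?_⟩
  · by_cases hc : c = b ∧ z ∈ Q
    · rw [hc.1, rematch_of_mem hc.2, mul_inv_cancel_right]
      exact htL
    · rw [rematch_of_notMem (by tauto)]
      rcases hz with hz | hz
      · exact hPU c hz ▸ hU.apply_mul_inv_mem c z hz
      · exact hPC c hz ▸ hC.apply_mul_inv_mem c z hz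
  · rw [rematch_of_notMem, hPU c hz]
    exact fun _ hzQ ↦ (hQUC z hzQ).elim (fun h ↦ htz h.2) fun h ↦ hUC.ne_of_mem hz h.1 rfl
  · rw [rematch_of_notMem, hPC c hz]
    exact fun _ hzQ ↦ (hQUC z hzQ).elim (fun h ↦ hUC.ne_of_mem h.1 hz rfl) fun h ↦ htz h.2

variable {T : Set W} {t a₀ : W}

theorem IsCosetExtension.exists_ssuperset (h : IsCosetExtension T t L N₀ U N)
    (h₀ : IsAlternatingCayleyCycle (Subgroup.closure T) L₀ N₀) (hL : L₀ ≤ L)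
    (hLT : ∀ b, L₀ b ⊆ T) (ht : t * t = 1)
    (hcomm : ∀ a ∈ T, a ≠ a₀ → Commute a t) (htL : ∀ b, ¬L₀ b ⊆ {a₀} → t ∈ L b) {x : W}
    (hx : x ∈ U) (htx : t * x ∉ U) : ∃ V N', IsCosetExtension T t L N₀ V N' ∧ U ⊂ V := by
  obtain ⟨g, hg, hlabel⟩ := h.exists_label_eq x hx htx
  obtain ⟨b, hb⟩ : ∃ b, N₀ b g * g⁻¹ ≠ a₀ := by
    by_contra! hall
    exact h₀.true_ne_false g hg (mul_right_cancel ((hall true).trans (hall false).symm))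
  have haL : N₀ b g * g⁻¹ ∈ L₀ b := h₀.apply_mul_inv_mem b g hg
  set y : W := g⁻¹ * (t * x) with hy
  set C : Set W := {z | z * y⁻¹ ∈ Subgroup.closure T} with hC
  have htxC : t * x ∈ C := by simpa [hC, hy, mul_assoc] using hg
  have hUC : Disjoint U C := by
    refine disjoint_left.2 fun z hzU hzC ↦ htx ?_
    have := h.closure_mul_mem (g * (z * y⁻¹)⁻¹) (mul_mem hg (inv_mem hzC)) z hzU
    simpa [hy, mul_assoc] using this
  obtain ⟨N', hN', hN'U, hN'C⟩ := h.exists_union (b := b) (a := N₀ b g * g⁻¹)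
    ((h₀.mono hL).mul_right y) hUC ht (htL b fun hsub ↦ hb (hsub haL)) (hcomm _ (hLT b haL) hb) hx
    htxC (by rw [← hlabel, inv_mul_cancel_right]) (by simp [hy, mul_assoc])
  refine ⟨U ∪ C, N', ⟨hN', .inl h.one_mem, union_subset h.subset_closure fun z hz ↦ ?_,
    fun k hk z ↦ .imp (h.closure_mul_mem k hk z) fun hz ↦ ?_, ?_⟩, ?_⟩
  · have hle := Subgroup.closure_mono (subset_insert t T)
    have hyt : y ∈ Subgroup.closure (insert t T) := mul_mem (inv_mem (hle hg))
      (mul_mem (Subgroup.subset_closure (mem_insert t T)) (h.subset_closure hx))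
    rw [← inv_mul_cancel_right z y]
    exact mul_mem (hle hz) hyt
  · simpa [hC, mul_assoc] using mul_mem hk hz
  · rintro z (hz | hz) htz
    · simpa only [hN'U _ z hz fun h ↦ htz (.inr h)] using
        h.exists_label_eq z hz fun h ↦ htz (.inl h)
    · refine ⟨z * y⁻¹, hz, fun c ↦ ?_⟩
      rw [hN'C c z hz fun h ↦ htz (.inl h)]
      group
  · exact ⟨subset_union_left, fun hsub ↦ htx (hsub (.inr htxC))⟩

/-- Starting from `N₀`, cosets of the subgroup generated by `T` are merged into the cycle one at a
time, along a pair of parallel edges `x — a * x` and `t * x — a * (t * x)` with `a ≠ a₀`. -/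
theorem IsAlternatingCayleyCycle.exists_closure_insert
    (h₀ : IsAlternatingCayleyCycle (Subgroup.closure T) L₀ N₀) (hL : L₀ ≤ L)
    (hLT : ∀ b, L₀ b ⊆ T) (hT : ∀ a ∈ T, a * a = 1) (ht : t * t = 1)
    (hcomm : ∀ a ∈ T, a ≠ a₀ → Commute a t) (htL : ∀ b, ¬L₀ b ⊆ {a₀} → t ∈ L b) :
    ∃ N, IsAlternatingCayleyCycle (Subgroup.closure (insert t T)) L N := by
  obtain ⟨U, ⟨N, hN⟩, hmax⟩ := (toFinite {U | ∃ N, IsCosetExtension T t L N₀ U N}).exists_maximal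
    ⟨_, N₀, (h₀.mono hL).isCosetExtension t⟩
  have htU : ∀ x ∈ U, t * x ∈ U := by
    by_contra! ⟨x, hx, htx⟩
    obtain ⟨V, N', hN', hUV⟩ := hN.exists_ssuperset h₀ hL hLT ht hcomm htL hx htx
    exact hUV.2 (hmax ⟨N', hN'⟩ hUV.1)
  have hU : U = Subgroup.closure (insert t T) := by
    refine hN.subset_closure.antisymm fun g hg ↦ ?_
    rw [← mul_one g]
    refine mul_mem_of_mem_closure (forall_mem_insert.2 ⟨ht, hT⟩) (forall_mem_insert.2 ⟨htU, ?_⟩) hg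
      hN.one_mem
    exact fun a ha ↦ hN.closure_mul_mem a (Subgroup.subset_closure ha)
  exact ⟨N, hU ▸ hN.toIsAlternatingCayleyCycle⟩

end CayleyCycle

section ReflectionRepresentation

open scoped Real

section Chebyshev

open Polynomial.Chebyshev

variable {θ : ℝ} {k : ℤ}

theorem eval_chebyshevS_sub_one_eq_zero (hθ : Real.sin θ ≠ 0) (hk : k * θ = π) :
    (S ℝ (k - 1)).eval (2 * Real.cos θ) = 0 := by
  refine (mul_eq_zero.1 ?_).resolve_right hθ
  rw [S_two_mul_real_cos, Int.cast_sub, Int.cast_one, sub_add_cancel, hk, Real.sin_pi]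

theorem eval_chebyshevS_add_eval_sub_one_eq_zero (hθ : Real.sin θ ≠ 0)
    (hk : (2 * k + 1) * θ = 2 * π) :
    (S ℝ k).eval (2 * Real.cos θ) + (S ℝ (k - 1)).eval (2 * Real.cos θ) = 0 := by
  refine (mul_eq_zero.1 ?_).resolve_right hθ
  rw [add_mul, S_two_mul_real_cos, S_two_mul_real_cos, Int.cast_sub, Int.cast_one, sub_add_cancel,
    show (k + 1) * θ = 2 * π - k * θ by linarith, Real.sin_two_pi_sub, neg_add_cancel]

end Chebyshev

section Reflection

open Module

variable {V : Type*} [AddCommGroup V] [Module ℝ V] {x y : V} {f g : Dual ℝ V}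

theorem reflection_mul_reflection_sq_eq_one (hf : f x = 2) (hg : g y = 2) (hfy : f y = 0)
    (hgx : g x = 0) : (reflection hf * reflection hg) ^ 2 = 1 := by
  ext z
  simp only [pow_two, LinearEquiv.mul_apply, LinearEquiv.coe_one, id_eq, reflection_apply, map_sub,
    map_smul, hf, hg, hfy, hgx]
  module

theorem reflection_mul_reflection_pow_eq_one {m : ℕ} (hm : 2 < m) (hf : f x = 2) (hg : g y = 2)
    (hfg : f y * g x = 4 * Real.cos (π / m) ^ 2) : (reflection hf * reflection hg) ^ m = 1 := by
  have hm' : (2 : ℝ) < m := by exact_mod_cast hm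
  set θ : ℝ := 2 * (π / m) with hθ
  have hmθ : m * θ = 2 * π := by rw [hθ]; field_simp
  have hsin : Real.sin θ ≠ 0 := by
    refine (Real.sin_pos_of_pos_of_lt_pi (by positivity) ?_).ne'
    rw [hθ, ← mul_div_assoc, div_lt_iff₀ (by linarith), mul_comm]
    gcongr
  have ht : 2 * Real.cos θ = f y * g x - 2 := by
    rw [hfg, hθ, Real.cos_two_mul]
    ring
  ext z
  rw [reflection_mul_reflection_pow_apply hf hg m z _ ht]
  obtain ⟨k, rfl | rfl⟩ := m.even_or_odd'
  · rw [show ((2 * k : ℕ) - 2 : ℤ) / 2 = k - 1 by lia,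
      show ((2 * k : ℕ) - 1 : ℤ) / 2 = k - 1 by lia,
      eval_chebyshevS_sub_one_eq_zero hsin (by push_cast at hmθ ⊢; linarith)]
    simp
  · rw [show ((2 * k + 1 : ℕ) - 1 : ℤ) / 2 = k by lia,
      show ((2 * k + 1 : ℕ) - 2 : ℤ) / 2 = k - 1 by lia,
      show ((2 * k + 1 : ℕ) - 3 : ℤ) / 2 = k - 1 by lia, show ((2 * k + 1 : ℕ) : ℤ) / 2 = k by lia,
      eval_chebyshevS_add_eval_sub_one_eq_zero hsin (by push_cast at hmθ ⊢; linarith)]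
    simp

theorem exists_invariant_posDef {W : Type*} [Group W] [Finite W] [FiniteDimensional ℝ V]
    (ρ : W →* V ≃ₗ[ℝ] V) : ∃ P : LinearMap.BilinForm ℝ V, P.IsSymm ∧ P.toQuadraticMap.PosDef ∧
      ∀ w x y, P (ρ w x) (ρ w y) = P x y := by
  have b := finBasis ℝ V
  let Q : LinearMap.BilinForm ℝ V := Matrix.toBilin b 1
  have hQ : Q.IsSymm := ⟨fun x y ↦ by simp [Q, Matrix.toBilin_apply, Matrix.one_apply, mul_comm]⟩
  have hpos : Q.toQuadraticMap.PosDef := by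
    rw [Q.posDef_toQuadraticMap_iff_matrix b hQ, LinearMap.BilinForm.toMatrix_toBilin]
    exact Matrix.PosDef.one
  have := Fintype.ofFinite W
  refine ⟨∑ w, Q.compl₁₂ (ρ w).toLinearMap (ρ w).toLinearMap, ⟨fun x y ↦ ?_⟩, fun x hx ↦ ?_,
    fun w x y ↦ ?_⟩
  · simp [LinearMap.sum_apply, hQ.eq]
  · simp only [LinearMap.BilinMap.toQuadraticMap_apply, LinearMap.sum_apply]
    exact Finset.sum_pos (fun w _ ↦ hpos _ (by simpa using hx)) Finset.univ_nonempty
  · simp only [LinearMap.sum_apply, LinearMap.compl₁₂_apply, LinearEquiv.coe_coe]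
    refine Fintype.sum_equiv (Equiv.mulRight w) _ _ fun v ↦ ?_
    simp

theorem two_mul_apply_of_reflection_invariant {P : LinearMap.BilinForm ℝ V} (hf : f x = 2)
    (hP : ∀ v w, P (reflection hf v) (reflection hf w) = P v w) (v : V) :
    2 * P v x = f v * P x x := by
  have := hP v x
  simp only [reflection_apply_self, reflection_apply, map_sub, map_neg, map_smul,
    LinearMap.sub_apply, LinearMap.smul_apply, smul_eq_mul] at this
  linarith

end Reflection

theorem posDef_of_eq_mul_diag {ι : Type*} [Finite ι] {P g : Matrix ι ι ℝ} (hP : P.PosDef)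
    (hg : ∀ i j, g i j = g j i) (hPg : ∀ i j, P i j = g i j * P j j) : g.PosDef := by
  classical
  have := Fintype.ofFinite ι
  have hsqrt (i) : √(P i i) ^ 2 = P i i := Real.sq_sqrt hP.diag_pos.le
  have hsqrt_ne (i) : √(P i i) ≠ 0 := (Real.sqrt_pos.2 hP.diag_pos).ne'
  set D : Matrix ι ι ℝ := .diagonal fun i ↦ (√(P i i))⁻¹
  have hD : g = D.conjTranspose * P * D := by
    ext i j
    have hsymm : g i j * P j j = g i j * P i i := by
      rw [← hPg, hg i j, ← hPg, ← hP.isHermitian.apply i j, star_trivial]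
    simp only [D, Matrix.diagonal_conjTranspose, Matrix.mul_diagonal, Matrix.diagonal_mul, hPg i j,
      star_trivial]
    rcases mul_eq_mul_left_iff.1 hsymm with hij | hij
    · rw [hij]
      field_simp [hsqrt_ne i]
      rw [hsqrt]
    · simp [hij]
  have hD_inj : Function.Injective D.mulVec := by
    refine fun v w hvw ↦ funext fun i ↦ ?_
    simpa [D, Matrix.mulVec_diagonal, hsqrt_ne i] using congr_fun hvw i
  rw [hD]
  exact hP.conjTranspose_mul_mul_same hD_inj

section CoxeterGram

variable {B : Type*} (M : CoxeterMatrix B) {i j : B}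

/-- The Gram matrix `⟨αᵢ, αⱼ⟩ = -cos (π / M i j)` of the simple roots of a Coxeter matrix. Since
`M i j = 0` stands for infinite order and `π / 0 = 0`, such entries are `-1`, as is customary. -/
noncomputable def coxeterGram : Matrix B B ℝ :=
  .of fun i j ↦ -Real.cos (π / M i j)

theorem coxeterGram_self (i : B) : coxeterGram M i i = 1 := by
  simp [coxeterGram]

theorem coxeterGram_comm (i j : B) : coxeterGram M i j = coxeterGram M j i := by
  simp [coxeterGram, M.symmetric i j]

variable {M}

theorem coxeterGram_of_eq_two (h : M i j = 2) : coxeterGram M i j = 0 := by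
  simp [coxeterGram, h]

theorem coxeterGram_le_of_ne (hij : i ≠ j) (h : M i j ≠ 2) : coxeterGram M i j ≤ -(1 / 2) := by
  have hone := M.off_diagonal i j hij
  simp only [coxeterGram, Matrix.of_apply, neg_le_neg_iff]
  rcases Nat.eq_zero_or_pos (M i j) with h_zero | hpos
  · norm_num [h_zero]
  · have hthree : (3 : ℝ) ≤ M i j := by exact_mod_cast (by lia : 3 ≤ M i j)
    rw [← Real.cos_pi_div_three]
    apply Real.cos_le_cos_of_nonneg_of_le_pi (by positivity) (by linarith [Real.pi_pos])
    gcongr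

variable (M) [Fintype B] [DecidableEq B]

/-- The coroot of the simple root `αᵢ`: the linear form `v ↦ 2 ⟨αᵢ, v⟩` in the basis of simple
roots. -/
noncomputable def simpleCoroot (i : B) : Module.Dual ℝ (B → ℝ) :=
  LinearMap.proj i ∘ₗ Matrix.mulVecLin ((2 : ℝ) • coxeterGram M)

theorem simpleCoroot_single (i j : B) :
    simpleCoroot M i (Pi.single j 1) = 2 * coxeterGram M i j := by
  simp [simpleCoroot]

theorem simpleCoroot_single_self (i : B) : simpleCoroot M i (Pi.single i 1) = 2 := by
  rw [simpleCoroot_single, coxeterGram_self, mul_one]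

theorem isLiftable_reflection :
    M.IsLiftable fun i ↦ Module.reflection (simpleCoroot_single_self M i) := by
  intro i j
  rcases eq_or_ne i j with rfl | hij
  · rw [M.diagonal, pow_one]
    exact LinearEquiv.ext (Module.involutive_reflection (simpleCoroot_single_self M i))
  have hone := M.off_diagonal i j hij
  obtain hm | hm | hm : M i j = 0 ∨ M i j = 2 ∨ 2 < M i j := by lia
  · rw [hm, pow_zero]
  · rw [hm]
    apply reflection_mul_reflection_sq_eq_one <;>
      rw [simpleCoroot_single, coxeterGram_of_eq_two, mul_zero]
    exacts [hm, M.symmetric i j ▸ hm]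
  · apply reflection_mul_reflection_pow_eq_one hm
    rw [simpleCoroot_single, simpleCoroot_single, coxeterGram_comm M j, coxeterGram,
      Matrix.of_apply]
    ring

variable {M} {W : Type*} [Group W] (cs : CoxeterSystem M W)

/-- The geometric representation of a Coxeter group, on the space with the simple roots as basis. -/
noncomputable def geometricRep : W →* (B → ℝ) ≃ₗ[ℝ] (B → ℝ) :=
  cs.lift ⟨_, isLiftable_reflection M⟩

theorem geometricRep_simple (i : B) :
    geometricRep cs (cs.simple i) = Module.reflection (simpleCoroot_single_self M i) :=
  cs.lift_apply_simple (isLiftable_reflection M) i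

end CoxeterGram

section FiniteCoxeter

variable {B W : Type*} [Finite B] [Group W] {M : CoxeterMatrix B}

theorem simple_injective (cs : CoxeterSystem M W) : Function.Injective cs.simple := by
  classical
  have := Fintype.ofFinite B
  intro i j hij
  by_contra hne
  have h := congr_fun (congr_arg (geometricRep cs · (Pi.single i 1)) hij) i
  simp only [geometricRep_simple, Module.reflection_apply_self, Module.reflection_apply] at h
  norm_num [Ne.symm hne, hne] at h

/-- A positive definite form invariant under the simple reflections has Gram matrix
`P i j = g i j * P j j` with `g = coxeterGram M`, so it only differs from `g` by rescaling. -/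
theorem coxeterGram_posDef [Finite W] (cs : CoxeterSystem M W) : (coxeterGram M).PosDef := by
  classical
  have := Fintype.ofFinite B
  obtain ⟨P, hsymm, hpos, hinv⟩ := exists_invariant_posDef (geometricRep cs)
  set α : Module.Basis B ℝ (B → ℝ) := Pi.basisFun ℝ B with hα
  refine posDef_of_eq_mul_diag ((P.posDef_toQuadraticMap_iff_matrix α hsymm).1 hpos)
    (coxeterGram_comm M) fun i j ↦ ?_
  have h := two_mul_apply_of_reflection_invariant (simpleCoroot_single_self M j)
    (fun v w ↦ geometricRep_simple cs j ▸ hinv (cs.simple j) v w) (Pi.single i 1)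
  rw [simpleCoroot_single, coxeterGram_comm] at h
  simp only [LinearMap.BilinForm.toMatrix_apply, hα, Pi.basisFun_apply]
  linarith

end FiniteCoxeter

end ReflectionRepresentation

section SparseGraph

open Finset

variable {V : Type*}

theorem card_interedges_eq_sum (G : SimpleGraph V) [DecidableRel G.Adj] (s t : Finset V) :
    #(G.interedges s t) = ∑ i ∈ s, #{j ∈ t | G.Adj i j} := by
  simp_rw [SimpleGraph.interedges_def, card_filter, sum_product]

theorem even_card_interedges_self (G : SimpleGraph V) [DecidableRel G.Adj] (s : Finset V) :
    Even #(G.interedges s s) := by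
  rw [← Set.ncard_coe_finset]
  refine even_ncard_of_involution (f := Prod.swap) (Finset.finite_toSet _) ?_
    (fun e _ ↦ e.swap_swap) ?_
  · rintro ⟨i, j⟩ he
    simpa [G.adj_comm, SimpleGraph.mem_interedges_iff, and_left_comm, and_assoc] using he
  · rintro ⟨i, j⟩ he hswap
    obtain rfl : j = i := congr_arg Prod.fst hswap
    simp [SimpleGraph.mem_interedges_iff] at he

variable [DecidableEq V] {G : SimpleGraph V} [DecidableRel G.Adj] {T C : Finset V}

/-- In a forest `G`, encoded by the bound on the numbers of edges, there is a leaf outside any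
subtree `T`. -/
theorem exists_card_filter_adj_le_one
    (hG : ∀ D : Finset V, D.Nonempty → #(G.interedges D D) < 2 * #D)
    (hT : 2 * #T ≤ #(G.interedges T T) + 2) (hTC : T ⊂ C) :
    ∃ j ∈ C \ T, #{k ∈ C | G.Adj j k} ≤ 1 := by
  by_contra! hdeg
  have hsplit (s : Finset V) :
      #(G.interedges s C) = #(G.interedges s T) + #(G.interedges s (C \ T)) := by
    simp_rw [card_interedges_eq_sum, ← sum_add_distrib, card_filter]
    exact sum_congr rfl fun i _ ↦ by rw [add_comm, sum_sdiff hTC.1]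
  have hsymm (s t : Finset V) : #(G.interedges s t) = #(G.interedges t s) :=
    have := G.symm
    Rel.card_interedges_comm s t
  have hdeg_sum : 2 * #(C \ T) ≤
      #(G.interedges (C \ T) T) + #(G.interedges (C \ T) (C \ T)) := by
    rw [← hsplit, card_interedges_eq_sum, mul_comm, ← smul_eq_mul]
    exact card_nsmul_le_sum _ _ _ hdeg
  have hC : #(G.interedges T T) + 2 * #(G.interedges (C \ T) T) +
      #(G.interedges (C \ T) (C \ T)) < 2 * #C := by
    have := hG C (sdiff_nonempty.2 hTC.2 |>.mono sdiff_subset)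
    rw [hsplit, hsymm C, hsymm C, hsplit, hsplit, hsymm T (C \ T)] at this
    lia
  have hCT := hG (C \ T) (sdiff_nonempty.2 hTC.2)
  have hcard := card_sdiff_add_card_eq_card hTC.1
  obtain ⟨m, hm⟩ := even_card_interedges_self G (C \ T)
  -- The inequalities leave only one edge from `C \ T` to `T` and `2 * #(C \ T) - 1`, an odd number,
  -- of oriented edges inside `C \ T`.
  lia

theorem two_mul_card_le_card_interedges_of_adj {i j k : V} (hij : G.Adj i j) (hjk : G.Adj j k)
    (hik : i ≠ k) : 2 * #{i, j, k} ≤ #(G.interedges {i, j, k} {i, j, k}) + 2 := by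
  have hsub : {(i, j), (j, i), (j, k), (k, j)} ⊆ G.interedges {i, j, k} {i, j, k} := by
    simp [insert_subset_iff, SimpleGraph.mem_interedges_iff, hij, hjk, hij.symm, hjk.symm]
  have hcard : #{(i, j), (j, i), (j, k), (k, j)} = 4 := by
    grind [hij.ne, hjk.ne]
  have hle := card_le_card hsub
  have := card_le_three (a := i) (b := j) (c := k)
  lia

theorem leaf_induction (hG : ∀ D : Finset V, D.Nonempty → #(G.interedges D D) < 2 * #D)
    (hT : 2 * #T ≤ #(G.interedges T T) + 2) {p : Finset V → Prop} (base : p T)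
    (insert : ∀ D j, j ∉ T → #{k ∈ D | G.Adj j k} ≤ 1 → p D → p (insert j D)) (hTC : T ⊆ C) :
    p C := by
  induction C using Finset.strongInduction with
  | H C ih =>
    obtain rfl | hTC := hTC.eq_or_ssubset
    · exact base
    obtain ⟨j, hj, hdeg⟩ := exists_card_filter_adj_le_one hG hT hTC
    rw [mem_sdiff] at hj
    rw [← insert_erase hj.1]
    exact insert _ j hj.2 ((card_le_card (filter_subset_filter _ (erase_subset j C))).trans hdeg)
      (ih _ (erase_ssubset hj.1) (subset_erase.2 ⟨hTC.1, hj.2⟩))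

end SparseGraph

section CoxeterGraph

open Finset

variable {B : Type*} (M : CoxeterMatrix B)

/-- The Coxeter graph (without its labels): distinct `i`, `j` are adjacent if `M i j ≠ 2`. -/
def coxeterGraph : SimpleGraph B where
  Adj i j := i ≠ j ∧ M i j ≠ 2
  symm := ⟨fun i j h ↦ ⟨h.1.symm, M.symmetric i j ▸ h.2⟩⟩
  loopless := ⟨fun _ h ↦ h.1 rfl⟩

variable {M} {W : Type*} [Group W]

theorem card_interedges_coxeterGraph_lt [Finite B] [Finite W] (cs : CoxeterSystem M W)
    [DecidableRel (coxeterGraph M).Adj] {D : Finset B} (hD : D.Nonempty) :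
    #((coxeterGraph M).interedges D D) < 2 * #D := by
  classical
  have := Fintype.ofFinite B
  set χ : B → ℝ := fun i ↦ if i ∈ D then 1 else 0 with hχ
  have hpos : 0 < ∑ i ∈ D, ∑ j ∈ D, coxeterGram M i j := by
    have := (coxeterGram_posDef cs).dotProduct_mulVec_pos (x := χ) fun h ↦
      have ⟨i, hi⟩ := hD
      by simpa [hχ, hi] using congr_fun h i
    simpa [hχ, dotProduct, Matrix.mulVec, Finset.sum_ite_mem] using this
  have hle (i j : B) : coxeterGram M i j ≤
      (if i = j then 1 else 0) - (if (coxeterGraph M).Adj i j then 1 else 0) / 2 := by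
    rcases eq_or_ne i j with rfl | hij
    · simp [coxeterGram_self]
    by_cases h : M i j = 2
    · simp [coxeterGram_of_eq_two h, hij, h, coxeterGraph]
    · simpa [hij, h, coxeterGraph] using coxeterGram_le_of_ne hij h
  have hsum : ∑ i ∈ D, ∑ j ∈ D, coxeterGram M i j ≤
      #D - (#((coxeterGraph M).interedges D D) : ℝ) / 2 := by
    refine (sum_le_sum fun i _ ↦ sum_le_sum fun j _ ↦ hle i j).trans_eq ?_
    rw [card_interedges_eq_sum]
    simp [sum_sub_distrib, ← sum_div]
  exact_mod_cast (by linarith : (#((coxeterGraph M).interedges D D) : ℝ) < 2 * #D)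

theorem simple_ne_one (cs : CoxeterSystem M W) (i : B) : cs.simple i ≠ 1 := fun h ↦ by
  simpa [h] using cs.length_simple i

theorem commute_simple_of_not_adj (cs : CoxeterSystem M W) {i j : B}
    (h : ¬(coxeterGraph M).Adj i j) : Commute (cs.simple i) (cs.simple j) := by
  rcases eq_or_ne i j with rfl | hij
  · exact .refl _
  have hm : M i j = 2 := not_not.1 fun hm ↦ h ⟨hij, hm⟩
  have hpow := cs.simple_mul_simple_pow i j
  rw [hm, pow_two] at hpow
  simpa [commute_iff_eq] using eq_inv_of_mul_eq_one_left hpow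

theorem even_length_simple_mul_iff (cs : CoxeterSystem M W) (i : B) (w : W) :
    Even (cs.length (cs.simple i * w)) ↔ ¬Even (cs.length w) := by
  rcases cs.length_simple_mul w i with h | h
  · rw [h, Nat.even_add_one]
  · rw [← h, Nat.even_add_one, not_not]

end CoxeterGraph

section Parabolic

open Set

variable {B W : Type*} [Group W] {M : CoxeterMatrix B} (cs : CoxeterSystem M W) {A C : Set B}
  {i j : B}

/-- The edge labels allowed for a cycle on the parabolic subgroup of `C` that avoids `A` in every
second step: the simple reflections of `C`, without those of `A` for the colour `true`. -/
def avoidingLabels (A C : Set B) (b : Bool) : Set W :=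
  cs.simple '' {k ∈ C | b = true → k ∉ A}

theorem isAlternatingCayleyCycle_closure_pair [Finite B] (hi : i ∉ A) (hij : j ≠ i) :
    ∃ N, IsAlternatingCayleyCycle (Subgroup.closure (cs.simple '' {j, i}))
      (avoidingLabels cs A {j, i}) N := by
  have h := isAlternatingCayleyCycle_closure_range (s := fun b ↦ cs.simple (bif b then i else j))
    (fun b ↦ cs.simple_mul_simple_self _) (fun b ↦ simple_ne_one cs _)
    ((simple_injective cs).ne hij.symm)
  rw [Bool.range_eq] at h
  rw [image_pair]
  refine ⟨_, h.mono fun b ↦ singleton_subset_iff.2 (mem_image_of_mem _ ?_)⟩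
  cases b <;> simp [hi]

theorem exists_isAlternatingCayleyCycle_closure_insert [Finite W] {N : Bool → W → W}
    (h : IsAlternatingCayleyCycle (Subgroup.closure (cs.simple '' C)) (avoidingLabels cs A C) N)
    (hadj : ∀ k ∈ C, (coxeterGraph M).Adj j k → k = i) (hj : C ⊆ insert i A ∨ j ∉ A) :
    ∃ N', IsAlternatingCayleyCycle (Subgroup.closure (cs.simple '' insert j C))
      (avoidingLabels cs A (insert j C)) N' := by
  rw [image_insert_eq]
  refine h.exists_closure_insert (a₀ := cs.simple i)
    (fun b ↦ image_mono fun k hk ↦ ⟨.inr hk.1, hk.2⟩) (fun b ↦ image_mono fun k hk ↦ hk.1)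
    (forall_mem_image.2 fun k _ ↦ cs.simple_mul_simple_self k) (cs.simple_mul_simple_self j)
    (forall_mem_image.2 fun k hk hki ↦ (commute_simple_of_not_adj cs fun hjk ↦ ?_).symm)
    fun b hb ↦ mem_image_of_mem _ ⟨.inl rfl, fun hbt hjA ↦ hb ?_⟩
  · exact hki (congr_arg cs.simple (hadj k hk hjk))
  · rintro _ ⟨k, ⟨hkC, hkA⟩, rfl⟩
    exact congr_arg cs.simple
      (((hj.resolve_right (not_not.2 hjA)) hkC).resolve_right (hkA hbt))

theorem exists_isAlternatingCayleyCycle_avoiding_univ [Finite B] [Finite W] {i₁ i₂ i₃ : B}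
    (h12 : (coxeterGraph M).Adj i₁ i₂) (h23 : (coxeterGraph M).Adj i₂ i₃) (h13 : i₁ ≠ i₃)
    (h13' : ¬(coxeterGraph M).Adj i₁ i₃) :
    ∃ N, IsAlternatingCayleyCycle univ (avoidingLabels cs {i₁, i₃} univ) N := by
  classical
  have := Fintype.ofFinite B
  obtain ⟨N₀, hN₀⟩ := isAlternatingCayleyCycle_closure_pair cs (A := {i₁, i₃})
    (by simp [h12.ne', h23.ne]) h12.ne
  have base := exists_isAlternatingCayleyCycle_closure_insert cs (j := i₃) (i := i₂) hN₀
    (by simp [(coxeterGraph M).adj_comm i₃, h13']) (.inl (by grind))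
  have h := leaf_induction (C := Finset.univ) (fun D ↦ card_interedges_coxeterGraph_lt cs)
    (two_mul_card_le_card_interedges_of_adj h12 h23 h13)
    (p := fun C ↦ ∃ N, IsAlternatingCayleyCycle (Subgroup.closure (cs.simple '' C))
      (avoidingLabels cs {i₁, i₃} C) N)
    (by simpa [insert_comm i₃, pair_comm i₃] using base) (fun D j hj hdeg ⟨N, hN⟩ ↦ ?_)
    (Finset.subset_univ _)
  · simpa [cs.subgroup_closure_range_simple] using h
  · have : Nonempty B := ⟨j⟩
    obtain ⟨i, hi⟩ := Finset.card_le_one_iff_subset_singleton.1 hdeg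
    rw [Finset.coe_insert]
    exact exists_isAlternatingCayleyCycle_closure_insert cs hN
      (fun k hk hjk ↦ Finset.mem_singleton.1 (hi (Finset.mem_filter.2 ⟨hk, hjk⟩)))
      (.inr fun hjA ↦ hj (by grind))

variable {cs}

theorem IsAlternatingCayleyCycle.exists_zmod_bijective_simple [Finite W] {N : Bool → W → W}
    (h : IsAlternatingCayleyCycle univ (avoidingLabels cs A C) N) :
    ∃ θ : ZMod (Nat.card W) → W, Function.Bijective θ ∧
      (∀ t, ∃ k, θ (t + 1) = cs.simple k * θ t) ∧
      ∀ t, ∃ k ∉ A, θ (2 * t + 1) = cs.simple k * θ (2 * t) := by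
  have hlabel (b : Bool) (x : W) : ∃ k, (b = true → k ∉ A) ∧ N b x = cs.simple k * x := by
    obtain ⟨k, hk, hkN⟩ := h.apply_mul_inv_mem b x (mem_univ x)
    exact ⟨k, hk.2, eq_mul_of_mul_inv_eq hkN.symm⟩
  obtain ⟨θ, hθ, hedge, htrue⟩ := h.exists_zmod_bijective
    (p := fun x ↦ decide (Even (cs.length x))) fun b x ↦ by
      obtain ⟨k, -, hk⟩ := hlabel b x
      simp only [hk, even_length_simple_mul_iff, decide_not]
  refine ⟨θ, hθ, fun t ↦ ?_, fun t ↦ ?_⟩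
  · obtain ⟨b, hb⟩ := hedge t
    obtain ⟨k, -, hk⟩ := hlabel b (θ t)
    exact ⟨k, hb ▸ hk⟩
  · obtain ⟨k, hkA, hk⟩ := hlabel true (θ (2 * t))
    exact ⟨k, hkA rfl, htrue t ▸ hk⟩

end Parabolic

theorem exists_hamiltonianCircuitMap_avoiding_every_second_edge_general
    {B W : Type*} [Fintype B] [Group W] [Finite W]
    (M : CoxeterMatrix B) (cs : CoxeterSystem M W) (i₁ i₂ i₃ : B)
    (hm12 : 3 ≤ M i₁ i₂) (hm23 : 3 ≤ M i₂ i₃) (hm13 : M i₁ i₃ = 2) :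
    ∃ θ : ZMod (Nat.card W) → W, Function.Bijective θ ∧
      (∀ t, θ (t + 1) * (θ t)⁻¹ ∈ Set.range cs.simple) ∧
      (∀ t : ZMod (Nat.card W),
        θ (2 * t + 1) * (θ (2 * t))⁻¹ ∉ ({cs.simple i₁, cs.simple i₃} : Set W)) ∧
      (Fintype.card B = 3 →
        ∀ t : ZMod (Nat.card W), θ (2 * t + 1) = cs.simple i₂ * θ (2 * t)) := by
  classical
  have hne {i j : B} (h : 2 ≤ M i j) : i ≠ j := by
    rintro rfl
    simp at h
  have h12 := hne (by lia : 2 ≤ M i₁ i₂)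
  have h23 := hne (by lia : 2 ≤ M i₂ i₃)
  have h13 := hne hm13.ge
  obtain ⟨N, hN⟩ := exists_isAlternatingCayleyCycle_avoiding_univ cs ⟨h12, by lia⟩ ⟨h23, by lia⟩ h13
    fun h ↦ h.2 hm13
  obtain ⟨θ, hθ, hedge, havoid⟩ := hN.exists_zmod_bijective_simple
  refine ⟨θ, hθ, fun t ↦ ?_, fun t ↦ ?_, fun hB t ↦ ?_⟩
  · obtain ⟨k, hk⟩ := hedge t
    simp [hk]
  · obtain ⟨k, hkA, hk⟩ := havoid t
    simpa [hk, (simple_injective cs).eq_iff] using hkA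
  · have huniv : ({i₁, i₂, i₃} : Finset B) = Finset.univ :=
      Finset.eq_univ_of_card _ (hB ▸ Finset.card_eq_three.2 ⟨_, _, _, h12, h13, h23, rfl⟩)
    obtain ⟨k, hkA, hk⟩ := havoid t
    have hk_mem := huniv ▸ Finset.mem_univ k
    grind

/-- Lemma 3.12 of the paper (Coxeter group version): let `(W, S)` be a finite Coxeter
system over `B` with `|B| ≥ 3` and crystallographic Coxeter matrix (off-diagonal
entries in `{2, 3, 4, 6}`).  If `i₁, i₂, i₃` are pairwise distinct with
`M i₁ i₂ ≥ 3`, `M i₂ i₃ ≥ 3` and `M i₁ i₃ = 2`, then there is a Hamiltonian circuit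
map `θ` such that every second edge label avoids `s_{i₁}` and `s_{i₃}`; in
particular, if `|B| = 3`, then `θ` is `i₂`-convenient. -/
theorem exists_hamiltonianCircuitMap_avoiding_every_second_edge
    {B W : Type*} [Fintype B] [Group W] [Finite W]
    (M : CoxeterMatrix B) (cs : CoxeterSystem M W)
    (hB : 3 ≤ Fintype.card B)
    (hcrys : ∀ i j : B, i ≠ j → M i j ∈ ({2, 3, 4, 6} : Set ℕ))
    (i₁ i₂ i₃ : B) (h12 : i₁ ≠ i₂) (h23 : i₂ ≠ i₃) (h13 : i₁ ≠ i₃)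
    (hm12 : 3 ≤ M i₁ i₂) (hm23 : 3 ≤ M i₂ i₃) (hm13 : M i₁ i₃ = 2) :
    ∃ θ : ZMod (Nat.card W) → W, Function.Bijective θ ∧
      (∀ t, θ (t + 1) * (θ t)⁻¹ ∈ Set.range cs.simple) ∧
      (∀ t : ZMod (Nat.card W),
        θ (2 * t + 1) * (θ (2 * t))⁻¹ ∉ ({cs.simple i₁, cs.simple i₃} : Set W)) ∧
      (Fintype.card B = 3 →
        ∀ t : ZMod (Nat.card W), θ (2 * t + 1) = cs.simple i₂ * θ (2 * t)) :=
  exists_hamiltonianCircuitMap_avoiding_every_second_edge_general M cs i₁ i₂ i₃ hm12 hm23 hm13
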